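/- arXiv:1807.05209 — 5 statements merged into one kernel-verified Lean document; each statement's English description precedes it below -/
import Mathlib

section
/- For all natural numbers n and k with 1 ≤ k ≤ n/2, the sum ∑_{i=0}^{k} C(n,i) of binomial coefficients satisfies ∑_{i=0}^{k} C(n,i) ≤ 2^{H(k/n)·n}, where H is the binary entropy function. -/
/-- The binary entropy function `H(ε) = -(ε log₂ ε + (1-ε) log₂ (1-ε))`
(with the convention `H(0) = H(1) = 0`, which holds automatically since
`Real.logb 2 0 = 0`). -/
noncomputable def binH (ε : ℝ) : ℝ :=
  -(ε * Real.logb 2 ε + (1 - ε) * Real.logb 2 (1 - ε))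

/-- For all `n, k` with `1 ≤ k ≤ n/2`, `∑_{i=0}^{k} C(n,i) ≤ 2^{H(k/n)·n}`. -/
theorem sum_choose_le_two_rpow_entropy (n k : ℕ) (hk1 : 1 ≤ k) (hk2 : (k : ℝ) ≤ n / 2) :
    (∑ i ∈ Finset.range (k + 1), (n.choose i : ℝ)) ≤
      (2 : ℝ) ^ (binH ((k : ℝ) / n) * n) := by
  have hk0 : (0 : ℝ) < k := by exact_mod_cast hk1
  have hn0 : (0 : ℝ) < n := by linarith
  have hkn : k ≤ n := by
    have : (k : ℝ) ≤ n := by linarith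
    exact_mod_cast this
  obtain ⟨p, hp⟩ : ∃ p : ℝ, p = (k : ℝ) / n := ⟨_, rfl⟩
  have hp0 : 0 < p := by rw [hp]; positivity
  have hpn : p * n = k := by rw [hp]; field_simp
  have hp2 : p ≤ 1 / 2 := by
    rw [hp, div_le_iff₀ hn0]; linarith
  have hq0 : 0 < 1 - p := by linarith
  have hpq : p ≤ 1 - p := by linarith
  have hR : (2 : ℝ) ^ (binH ((k : ℝ) / n) * n) = (p ^ k * (1 - p) ^ (n - k))⁻¹ := by
    rw [← hp]
    have e : binH p * n = -(Real.logb 2 (p ^ k * (1 - p) ^ (n - k))) := by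
      rw [Real.logb_mul (by positivity) (by positivity), Real.logb_pow, Real.logb_pow,
        Nat.cast_sub hkn, ← hpn]
      unfold binH
      ring
    rw [e, Real.rpow_neg (by norm_num), Real.rpow_logb (by norm_num) (by norm_num) (by positivity)]
  rw [hR, ← one_div, le_div_iff₀ (by positivity), Finset.sum_mul]
  have hb : ∑ i ∈ Finset.range (n + 1), p ^ i * (1 - p) ^ (n - i) * (n.choose i : ℝ) = 1 := by
    rw [← add_pow]; simp
  refine le_of_le_of_eq ?_ hb
  refine le_trans (Finset.sum_le_sum fun i hi => ?_)
    (Finset.sum_le_sum_of_subset_of_nonneg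
      (Finset.range_subset_range.2 (Nat.succ_le_succ hkn)) fun i _ _ => by positivity)
  have hik : i ≤ k := Nat.lt_succ_iff.1 (Finset.mem_range.1 hi)
  rw [mul_comm]
  refine mul_le_mul_of_nonneg_right ?_ (by positivity)
  obtain ⟨d, rfl⟩ := Nat.exists_eq_add_of_le hik
  have e2 : n - i = d + (n - (i + d)) := by omega
  rw [e2, pow_add, pow_add, mul_assoc]
  gcongr
end

section
/- If C ⊆ 𝒮 is a minimum set cover of U and P is a partial cover of C, then f(U,𝒮) = f(P,𝒮) + f(U∖P,𝒮). -/
/-- `coverNum 𝒮 X` is the minimum cardinality of a subcollection `T ⊆ 𝒮`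
whose union covers `X`. -/
noncomputable def coverNum {α : Type*} [DecidableEq α]
    (𝒮 : Finset (Finset α)) (X : Finset α) : ℕ :=
  sInf {m | ∃ T ⊆ 𝒮, X ⊆ T.sup id ∧ T.card = m}

theorem coverNum_le_aux {α : Type*} [DecidableEq α] {𝒮 T : Finset (Finset α)} {X : Finset α}
    (hT : T ⊆ 𝒮) (hX : X ⊆ T.sup id) : coverNum 𝒮 X ≤ T.card :=
  Nat.sInf_le ⟨T, hT, hX, rfl⟩

theorem coverNum_spec_aux {α : Type*} [DecidableEq α] {𝒮 T : Finset (Finset α)} {X : Finset α}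
    (hT : T ⊆ 𝒮) (hX : X ⊆ T.sup id) :
    ∃ T' ⊆ 𝒮, X ⊆ T'.sup id ∧ T'.card = coverNum 𝒮 X :=
  Nat.sInf_mem (s := {m | ∃ T ⊆ 𝒮, X ⊆ T.sup id ∧ T.card = m}) ⟨_, T, hT, hX, rfl⟩

/-- If `C ⊆ 𝒮` is a minimum set cover of `U` and `P` is a partial cover of `C`
(the union of some subcollection `C' ⊆ C`), then `f(U,𝒮) = f(P,𝒮) + f(U∖P,𝒮)`. -/
theorem coverNum_eq_partialCover_add {α : Type*} [DecidableEq α]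
    (U : Finset α) (𝒮 : Finset (Finset α)) (h𝒮 : ∀ S ∈ 𝒮, S ⊆ U)
    (C : Finset (Finset α)) (hC : C ⊆ 𝒮) (hCcov : U ⊆ C.sup id)
    (hCmin : C.card = coverNum 𝒮 U)
    (C' : Finset (Finset α)) (hC' : C' ⊆ C) (P : Finset α) (hP : P = C'.sup id) :
    coverNum 𝒮 U = coverNum 𝒮 P + coverNum 𝒮 (U \ P) := by
  have h1 : P ⊆ C'.sup id := hP.le
  have h2 : U \ P ⊆ (C \ C').sup id := by
    intro x hx
    rw [Finset.mem_sdiff] at hx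
    have h3 := hCcov hx.1
    have h4 := hx.2
    rw [hP] at h4
    simp only [Finset.mem_sup, id, Finset.mem_sdiff] at h3 h4 ⊢
    obtain ⟨S, hS, hxS⟩ := h3
    exact ⟨S, ⟨hS, fun h => h4 ⟨S, h, hxS⟩⟩, hxS⟩
  have hs1 : C' ⊆ 𝒮 := hC'.trans hC
  have hs2 : C \ C' ⊆ 𝒮 := Finset.sdiff_subset.trans hC
  apply le_antisymm
  · obtain ⟨A, hA, hA1, hA2⟩ := coverNum_spec_aux hs1 h1
    obtain ⟨B, hB, hB1, hB2⟩ := coverNum_spec_aux hs2 h2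
    rw [← hA2, ← hB2]
    refine (coverNum_le_aux (Finset.union_subset hA hB) ?_).trans (Finset.card_union_le A B)
    rw [Finset.sup_union]
    intro x hx
    by_cases hxP : x ∈ P
    · exact Finset.mem_union_left _ (hA1 hxP)
    · exact Finset.mem_union_right _ (hB1 (Finset.mem_sdiff.2 ⟨hx, hxP⟩))
  · rw [← hCmin, ← Finset.card_sdiff_add_card_eq_card hC', add_comm]
    exact add_le_add (coverNum_le_aux hs2 h2) (coverNum_le_aux hs1 h1)
end

section
/- For every subset S ⊆ V, all distinct u, v ∈ S, and every integer k with 2 ≤ k ≤ |S| − 1: f(S,u,v) = min over all X ⊆ S with |X| = k, u ∈ X, v ∉ X, and all t ∈ X∖{u}, of ( f(X,u,t) + f((S∖X) ∪ {t}, t, v) ). -/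
/-- The total weight of a walk given as a list of vertices: the sum of `w`
over consecutive pairs. -/
def pathCost {α : Type*} (w : α → α → ℕ∞) : List α → ℕ∞
  | [] => 0
  | [_] => 0
  | a :: b :: l => w a b + pathCost w (b :: l)

/-- `minPath w S u v` is the minimum, over all sequences listing each element of `S`
exactly once that start at `u` and end at `v`, of the sum of `w` over consecutive
pairs; it is `⊤` if no such sequence exists. -/
noncomputable def minPath {α : Type*} [DecidableEq α]
    (w : α → α → ℕ∞) (S : Finset α) (u v : α) : ℕ∞ :=
  sInf {c | ∃ l : List α, l.Nodup ∧ l.toFinset = S ∧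
      l.head? = some u ∧ l.getLast? = some v ∧ c = pathCost w l}

theorem pathCost_split {α : Type*} (w : α → α → ℕ∞) (t : α) (b : List α) :
    ∀ a : List α, pathCost w (a ++ t :: b) = pathCost w (a ++ [t]) + pathCost w (t :: b)
  | [] => by simp [pathCost]
  | [x] => by simp [pathCost]
  | x :: y :: l => by
    have := pathCost_split w t b (y :: l)
    simp only [List.cons_append, pathCost] at this ⊢
    rw [this, add_assoc]

theorem minPath_le {α : Type*} [DecidableEq α] (w : α → α → ℕ∞) (S : Finset α) (u v : α)
    (l : List α) (h1 : l.Nodup) (h2 : l.toFinset = S) (h3 : l.head? = some u)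
    (h4 : l.getLast? = some v) : minPath w S u v ≤ pathCost w l :=
  sInf_le ⟨l, h1, h2, h3, h4, rfl⟩

theorem minPath_attained {α : Type*} [DecidableEq α] (w : α → α → ℕ∞) (S : Finset α) (u v : α) :
    minPath w S u v = ⊤ ∨ ∃ l : List α, l.Nodup ∧ l.toFinset = S ∧
      l.head? = some u ∧ l.getLast? = some v ∧ minPath w S u v = pathCost w l := by
  rcases Set.eq_empty_or_nonempty {c | ∃ l : List α, l.Nodup ∧ l.toFinset = S ∧
      l.head? = some u ∧ l.getLast? = some v ∧ c = pathCost w l} with h | h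
  · left
    rw [minPath, h, sInf_empty]
  · right
    exact csInf_mem h

theorem minPath_recurrence_split {α : Type*} [DecidableEq α]
    (w : α → α → ℕ∞) (S : Finset α) (u v : α)
    (hu : u ∈ S) (hv : v ∈ S) (huv : u ≠ v)
    (k : ℕ) (hk1 : 2 ≤ k) (hk2 : k ≤ S.card - 1) :
    minPath w S u v =
      (S.powerset.filter (fun X => X.card = k ∧ u ∈ X ∧ v ∉ X)).inf
        (fun X => (X.erase u).inf
          (fun t => minPath w X u t + minPath w ((S \ X) ∪ {t}) t v)) := by
  apply le_antisymm
  · refine Finset.le_inf fun X hX => Finset.le_inf fun t ht => ?_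
    simp only [Finset.mem_filter, Finset.mem_powerset] at hX
    obtain ⟨hXS, hc, huX, hvX⟩ := hX
    obtain ⟨htu, htX⟩ := Finset.mem_erase.1 ht
    rcases minPath_attained w X u t with h | ⟨l1, n1, f1, hd1, la1, e1⟩
    · simp [h]
    rcases minPath_attained w ((S \ X) ∪ {t}) t v with h | ⟨l2, n2, f2, hd2, la2, e2⟩
    · rw [h, add_top]; exact le_top
    rw [e1, e2]
    obtain ⟨a, rfl⟩ := List.getLast?_eq_some_iff.1 la1
    obtain ⟨b, rfl⟩ := List.head?_eq_some_iff.1 hd2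
    rw [← pathCost_split]
    have m1 : ∀ x, (x ∈ a ∨ x = t) ↔ x ∈ X := by intro x; rw [← f1]; simp [or_comm]
    have m2 : ∀ x, (x = t ∨ x ∈ b) ↔ ((x ∈ S ∧ x ∉ X) ∨ x = t) := by
      intro x
      have : x ∈ (t :: b).toFinset ↔ x ∈ (S \ X) ∪ {t} := by rw [f2]
      simp only [List.mem_toFinset, List.mem_cons, Finset.mem_union, Finset.mem_sdiff,
        Finset.mem_singleton] at this
      exact this
    have hb : ∀ x ∈ b, x ∈ S ∧ x ∉ X := by
      intro x hx
      have hxt : x ≠ t := by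
        rintro rfl
        simp [hx] at n2
      exact ((m2 x).1 (Or.inr hx)).resolve_right hxt
    apply minPath_le
    · rw [List.nodup_append] at n1 ⊢
      refine ⟨n1.1, n2, ?_⟩
      intro x hx y hy
      rcases List.mem_cons.1 hy with rfl | hy
      · exact n1.2.2 x hx _ (by simp)
      · rintro rfl
        exact (hb x hy).2 ((m1 x).1 (Or.inl hx))
    · ext x
      have := m1 x
      have := m2 x
      have := hb x
      have := @hXS x
      simp only [List.mem_toFinset, List.mem_append, List.mem_cons]
      tauto
    · cases a with
      | nil => simp at hd1; exact absurd hd1 htu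
      | cons y a => simpa using hd1
    · simpa using la2
  · refine le_sInf ?_
    rintro c ⟨l, hn, rfl, hd, hl, rfl⟩
    rw [List.toFinset_card_of_nodup hn] at hk2
    have hlt : k - 1 < l.length := by omega
    obtain ⟨a, t, b, rfl, hal⟩ : ∃ a t b, l = a ++ t :: b ∧ a.length = k - 1 :=
      ⟨l.take (k-1), l[k-1], l.drop (k-1+1), by simp, by simp; omega⟩
    rw [pathCost_split]
    obtain ⟨a, rfl⟩ : ∃ a', a = u :: a' := by
      cases a with
      | nil => simp at hal; omega
      | cons y a => simp at hd; exact ⟨a, by rw [hd]⟩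
    have hb : b ≠ [] := by
      rintro rfl
      simp at hk2 hal
      omega
    have hlb : b.getLast? = some v := by
      cases b with
      | nil => exact absurd rfl hb
      | cons y b => 
        rw [List.getLast?_append, List.getLast?_cons_cons] at hl
        simpa [List.getLast?_cons] using hl
    have hvb : v ∈ b := List.mem_of_getLast? hlb
    have hn1 : ((u :: a) ++ [t]).Nodup := hn.sublist (by simp)
    have hn2 : (t :: b).Nodup := hn.sublist (by simp)
    have hdis : ∀ x ∈ b, x ∉ (u :: a) ++ [t] := by
      intro x hx hx'
      have : (((u :: a) ++ [t]) ++ b).Nodup := by simpa using hn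
      exact (List.nodup_append.1 this).2.2 x hx' x hx rfl
    have htu : t ≠ u := by
      rintro rfl
      simp at hn1
    refine le_trans (Finset.inf_le (b := ((u :: a) ++ [t]).toFinset) ?_)
      (le_trans (Finset.inf_le (b := t) ?_) (add_le_add ?_ ?_))
    · simp only [Finset.mem_filter, Finset.mem_powerset]
      refine ⟨?_, ?_, by simp, fun h => hdis v hvb (List.mem_toFinset.1 h)⟩
      · intro x
        simp only [List.mem_toFinset, List.mem_append, List.mem_cons, List.not_mem_nil]
        tauto
      · rw [List.toFinset_card_of_nodup hn1, List.length_append, hal]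
        simp; omega
    · simp [htu]
    · exact minPath_le _ _ _ _ _ hn1 rfl (by simp) List.getLast?_concat
    · refine minPath_le _ _ _ _ _ hn2 ?_ (by simp) ?_
      · ext x
        have := hdis x
        simp only [List.mem_toFinset, List.mem_append, List.mem_cons, List.not_mem_nil,
          Finset.mem_union, Finset.mem_sdiff, Finset.mem_singleton] at this ⊢
        tauto
      · simp [List.getLast?_cons, hlb]
end

section
/- For every S ⊆ V and every integer k with 1 ≤ k ≤ |S| − 1: f(S) = min over all A ⊆ S with |A| = k of ( f(A) + f(S∖A) + |{(b,a) ∈ E : b ∈ S∖A, a ∈ A}| ). -/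
/-- The induced edge set `E(S) = E ∩ (S × S)`. -/
def inducedEdges {α : Type*} [DecidableEq α] (E : Finset (α × α)) (S : Finset α) :
    Finset (α × α) :=
  E.filter (fun p => p.1 ∈ S ∧ p.2 ∈ S)

/-- `fasNum E S` is the minimum cardinality of a set `F ⊆ E(S)` such that the
directed graph `(S, E(S) ∖ F)` is acyclic (its transitive closure is irreflexive):
the minimum feedback arc set size of the subgraph induced on `S`. -/
noncomputable def fasNum {α : Type*} [DecidableEq α]
    (E : Finset (α × α)) (S : Finset α) : ℕ :=
  sInf {m | ∃ F ⊆ inducedEdges E S,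
    (∀ a : α, ¬ Relation.TransGen (fun u v => (u, v) ∈ inducedEdges E S \ F) a a) ∧
    F.card = m}

lemma fas_le {α : Type*} [DecidableEq α] (E : Finset (α × α)) (S : Finset α)
    (F : Finset (α × α)) (hF : F ⊆ inducedEdges E S)
    (h : ∀ a : α, ¬ Relation.TransGen (fun u v => (u, v) ∈ inducedEdges E S \ F) a a) :
    fasNum E S ≤ F.card :=
  Nat.sInf_le ⟨F, hF, h, rfl⟩

lemma fas_attained {α : Type*} [DecidableEq α] (E : Finset (α × α)) (S : Finset α) :
    ∃ F ⊆ inducedEdges E S,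
    (∀ a : α, ¬ Relation.TransGen (fun u v => (u, v) ∈ inducedEdges E S \ F) a a) ∧
    F.card = fasNum E S := by
  apply Nat.sInf_mem (s := {m | ∃ F ⊆ inducedEdges E S,
    (∀ a : α, ¬ Relation.TransGen (fun u v => (u, v) ∈ inducedEdges E S \ F) a a) ∧
    F.card = m})
  refine ⟨_, inducedEdges E S, subset_rfl, ?_, rfl⟩
  intro a h
  have : ∀ b, Relation.TransGen
      (fun u v => (u, v) ∈ inducedEdges E S \ inducedEdges E S) a b → False := by
    intro b hb
    induction hb with
    | single h => simp at h
    | tail _ _ ih => exact ih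
  exact this a h

lemma exists_closed {α : Type*} [DecidableEq α] (S : Finset α) (r : α → α → Prop)
    (hr : ∀ a, ¬ Relation.TransGen r a a) (k : ℕ) (hk : k ≤ S.card) :
    ∃ A ⊆ S, A.card = k ∧ ∀ u ∈ S \ A, ∀ v ∈ A, ¬ r u v := by
  induction k with
  | zero => exact ⟨∅, by simp, by simp, by simp⟩
  | succ k ih =>
    obtain ⟨A, hA, hc, hcl⟩ := ih (by omega)
    have hne : (S \ A).Nonempty := by
      rw [← Finset.card_pos, Finset.card_sdiff_of_subset hA]; omega
    have : IsStrictOrder α (Relation.TransGen r) :=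
      { irrefl := hr, trans := fun _ _ _ => Relation.TransGen.trans }
    have wf := (S \ A).wellFoundedOn (r := Relation.TransGen r)
    obtain ⟨z, hz⟩ := hne
    obtain ⟨⟨x, hx⟩, -, hmin⟩ := WellFounded.has_min wf Set.univ ⟨⟨z, hz⟩, trivial⟩
    have hx' := Finset.mem_sdiff.1 (Finset.mem_coe.1 hx)
    refine ⟨insert x A, Finset.insert_subset hx'.1 hA, ?_, ?_⟩
    · rw [Finset.card_insert_of_notMem hx'.2, hc]
    · intro u hu v hv huv
      simp only [Finset.mem_sdiff, Finset.mem_insert, not_or] at hu hv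
      rcases hv with rfl | hv
      · exact hmin ⟨u, by simp [hu.1, hu.2.2]⟩ trivial (Relation.TransGen.single huv)
      · exact hcl u (by simp [hu.1, hu.2.2]) v hv huv

/-- For `S ⊆ V` and `1 ≤ k ≤ |S| - 1`:
`f(S) = min_{A ⊆ S, |A| = k} ( f(A) + f(S∖A) + |{(b,a) ∈ E : b ∈ S∖A, a ∈ A}| )`. -/
theorem fasNum_recurrence {α : Type*} [DecidableEq α]
    (E : Finset (α × α)) (S : Finset α) (k : ℕ)
    (hk1 : 1 ≤ k) (hk2 : k ≤ S.card - 1) :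
    fasNum E S =
      sInf {m | ∃ A ⊆ S, A.card = k ∧
        m = fasNum E A + fasNum E (S \ A) +
          (E.filter (fun p => p.1 ∈ S \ A ∧ p.2 ∈ A)).card} := by
  apply le_antisymm
  · apply le_csInf
    · obtain ⟨A, hA, hc⟩ := Finset.exists_subset_card_eq (s := S) (n := k) (by omega)
      exact ⟨_, A, hA, hc, rfl⟩
    · rintro m ⟨A, hA, hc, rfl⟩
      obtain ⟨F1, h1, a1, c1⟩ := fas_attained E A
      obtain ⟨F2, h2, a2, c2⟩ := fas_attained E (S \ A)
      rw [← c1, ← c2]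
      refine (fas_le E S (F1 ∪ F2 ∪ E.filter (fun p => p.1 ∈ S \ A ∧ p.2 ∈ A)) ?_ ?_).trans ?_
      · intro p hp
        have := @h1 p
        have := @h2 p
        have := @hA p.1
        have := @hA p.2
        simp only [inducedEdges, Finset.mem_union, Finset.mem_filter, Finset.mem_sdiff] at *
        tauto
      · have key : ∀ a b, Relation.TransGen (fun u v => (u, v) ∈ inducedEdges E S \
            (F1 ∪ F2 ∪ E.filter (fun p => p.1 ∈ S \ A ∧ p.2 ∈ A))) a b →
            (a ∈ A ∧ b ∈ A ∧
              Relation.TransGen (fun u v => (u, v) ∈ inducedEdges E A \ F1) a b) ∨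
            (a ∉ A ∧ b ∉ A ∧
              Relation.TransGen (fun u v => (u, v) ∈ inducedEdges E (S \ A) \ F2) a b) ∨
            (a ∈ A ∧ b ∉ A) := by
          have step : ∀ u v, (u, v) ∈ inducedEdges E S \
            (F1 ∪ F2 ∪ E.filter (fun p => p.1 ∈ S \ A ∧ p.2 ∈ A)) →
            (u ∈ A ∧ v ∈ A ∧ (u, v) ∈ inducedEdges E A \ F1) ∨
            (u ∉ A ∧ v ∉ A ∧ (u, v) ∈ inducedEdges E (S \ A) \ F2) ∨
            (u ∈ A ∧ v ∉ A) := by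
            intro u v h
            simp only [inducedEdges, Finset.mem_union, Finset.mem_filter,
              Finset.mem_sdiff] at *
            tauto
          intro a b h
          induction h with
          | single h =>
            rcases step _ _ h with ⟨x, y, z⟩ | ⟨x, y, z⟩ | h
            · exact Or.inl ⟨x, y, .single z⟩
            · exact Or.inr (Or.inl ⟨x, y, .single z⟩)
            · exact Or.inr (Or.inr h)
          | tail _ h ih =>
            rcases step _ _ h with ⟨x, y, z⟩ | ⟨x, y, z⟩ | ⟨x, y⟩ <;>
            rcases ih with ⟨x', y', z'⟩ | ⟨x', y', z'⟩ | ⟨x', y'⟩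
            · exact Or.inl ⟨x', y, z'.tail z⟩
            · exact absurd x y'
            · exact absurd x y'
            · exact absurd y' x
            · exact Or.inr (Or.inl ⟨x', y, z'.tail z⟩)
            · exact Or.inr (Or.inr ⟨x', y⟩)
            · exact Or.inr (Or.inr ⟨x', y⟩)
            · exact absurd x y'
            · exact absurd x y'
        intro a h
        rcases key a a h with h | h | h
        · exact a1 a h.2.2
        · exact a2 a h.2.2
        · exact h.2 h.1
      · refine (Finset.card_union_le _ _).trans ?_
        have := Finset.card_union_le F1 F2
        omega
  · obtain ⟨F, hF, ha, hc⟩ := fas_attained E S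
    obtain ⟨A, hA, hk, hcl⟩ := exists_closed S _ ha k (by omega)
    refine le_trans (Nat.sInf_le ⟨A, hA, hk, rfl⟩) ?_
    have sub : ∀ T ⊆ S, fasNum E T ≤ (F ∩ inducedEdges E T).card := by
      intro T hT
      apply fas_le _ _ _ Finset.inter_subset_right
      intro a h
      refine ha a (Relation.TransGen.mono ?_ _ _ h)
      intro u v huv
      have := @hT u
      have := @hT v
      simp only [inducedEdges, Finset.mem_inter, Finset.mem_filter, Finset.mem_sdiff] at *
      tauto
    have hC : E.filter (fun p => p.1 ∈ S \ A ∧ p.2 ∈ A) ⊆ F := by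
      rintro ⟨u, v⟩ h
      simp only [Finset.mem_filter] at h
      by_contra hn
      apply hcl u h.2.1 v h.2.2
      simp only [inducedEdges, Finset.mem_filter, Finset.mem_sdiff]
      exact ⟨⟨h.1, (Finset.mem_sdiff.1 h.2.1).1, hA h.2.2⟩, hn⟩
    have s1 := sub A hA
    have s2 := sub (S \ A) Finset.sdiff_subset
    have d1 : Disjoint (F ∩ inducedEdges E A) (F ∩ inducedEdges E (S \ A)) := by
      rw [Finset.disjoint_left]
      intro p
      simp only [inducedEdges, Finset.mem_inter, Finset.mem_filter, Finset.mem_sdiff]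
      tauto
    have d2 : Disjoint (F ∩ inducedEdges E A ∪ F ∩ inducedEdges E (S \ A))
        (E.filter (fun p => p.1 ∈ S \ A ∧ p.2 ∈ A)) := by
      rw [Finset.disjoint_left]
      intro p
      simp only [inducedEdges, Finset.mem_inter, Finset.mem_union, Finset.mem_filter,
        Finset.mem_sdiff]
      tauto
    have := Finset.card_le_card (Finset.union_subset (Finset.union_subset
      (Finset.inter_subset_left (s₁ := F) (s₂ := inducedEdges E A))
      (Finset.inter_subset_left (s₁ := F) (s₂ := inducedEdges E (S \ A)))) hC)
    rw [Finset.card_union_of_disjoint d2, Finset.card_union_of_disjoint d1] at this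
    omega
end

section
/- Let T be a rooted tree on a finite vertex set V with |V| = n ≥ 1, root r, and parent function p. Then the number of valid pairs (s, S), where s : V∖{r} → {−1, 0, +1} and S ⊆ V, is at most 2 · 5^{n−1}. -/
open Classical in
/-- Encoding of the local data at a non-root vertex: `b` is the parent's membership,
`c` the vertex's membership and `x` its sign. -/
noncomputable def codeAux (b c : Prop) (x : ℤ) : Fin 5 :=
  if (b ↔ c) then (if x = -1 then 0 else if x = 0 then 1 else 2)
  else if x = 0 then (if b then 4 else 3) else (if b then 3 else 4)

/-- The encoding determines membership and sign. -/
lemma codeAux_inj (b c c' : Prop) (x x' : ℤ) (hx : x = -1 ∨ x = 0 ∨ x = 1)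
    (hx' : x' = -1 ∨ x' = 0 ∨ x' = 1)
    (h1 : ¬ (b ∧ x = 1 ∧ ¬ c)) (h2 : ¬ (¬ b ∧ x = -1 ∧ c))
    (h1' : ¬ (b ∧ x' = 1 ∧ ¬ c')) (h2' : ¬ (¬ b ∧ x' = -1 ∧ c'))
    (h : codeAux b c x = codeAux b c' x') : (c ↔ c') ∧ x = x' := by
  unfold codeAux at h
  by_cases hb : b <;> by_cases hc : c <;> by_cases hc' : c' <;>
    rcases hx with rfl | rfl | rfl <;> rcases hx' with rfl | rfl | rfl <;>
    simp [hb, hc, hc'] at h h1 h2 h1' h2' ⊢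

/-- Let `T` be a rooted tree on a finite vertex set `V` with `|V| = n ≥ 1`, root `r`
and parent function `p` (every vertex reaches `r` by iterating `p`). Then the number
of valid pairs `(s, S)` with `s : V∖{r} → {-1, 0, +1}` and `S ⊆ V` is at most
`2 · 5^(n-1)`, where `(s, S)` is valid if for every `v ≠ r` it is not the case that
`p(v) ∈ S`, `s(v) = +1` and `v ∉ S`, and not the case that `p(v) ∉ S`, `s(v) = -1`
and `v ∈ S`. -/
theorem card_valid_pairs_le {V : Type*} [Fintype V]
    (n : ℕ) (hn : n = Fintype.card V) (hn1 : 1 ≤ n)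
    (r : V) (p : V → V) (htree : ∀ v : V, ∃ k : ℕ, p^[k] v = r) :
    Nat.card {q : ({v : V // v ≠ r} → {x : ℤ // x = -1 ∨ x = 0 ∨ x = 1}) × Finset V //
        ∀ v : {v : V // v ≠ r},
          ¬(p v.1 ∈ q.2 ∧ (q.1 v : ℤ) = 1 ∧ v.1 ∉ q.2) ∧
          ¬(p v.1 ∉ q.2 ∧ (q.1 v : ℤ) = -1 ∧ v.1 ∈ q.2)} ≤ 2 * 5 ^ (n - 1) := by
  classical
  let f : {q : ({v : V // v ≠ r} → {x : ℤ // x = -1 ∨ x = 0 ∨ x = 1}) × Finset V //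
        ∀ v : {v : V // v ≠ r},
          ¬(p v.1 ∈ q.2 ∧ (q.1 v : ℤ) = 1 ∧ v.1 ∉ q.2) ∧
          ¬(p v.1 ∉ q.2 ∧ (q.1 v : ℤ) = -1 ∧ v.1 ∈ q.2)} →
      Bool × ({v : V // v ≠ r} → Fin 5) :=
    fun q => (decide (r ∈ q.1.2),
      fun v => codeAux (p v.1 ∈ q.1.2) (v.1 ∈ q.1.2) (q.1.1 v : ℤ))
  have hf : Function.Injective f := by
    rintro ⟨⟨s, S⟩, hq⟩ ⟨⟨s', S'⟩, hq'⟩ h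
    have hr : r ∈ S ↔ r ∈ S' := by
      have := congrArg Prod.fst h
      simpa [f] using this
    have hstep : ∀ v : {v : V // v ≠ r}, (p v.1 ∈ S ↔ p v.1 ∈ S') →
        ((v.1 ∈ S ↔ v.1 ∈ S') ∧ (s v : ℤ) = s' v) := by
      intro v hv
      have hc := congrFun (congrArg Prod.snd h) v
      simp only [f] at hc
      have a := hq v
      have a' := hq' v
      simp only at a a'
      rw [← hv] at a'
      rw [← propext hv] at hc
      exact codeAux_inj _ _ _ _ _ (s v).2 (s' v).2 a.1 a.2 a'.1 a'.2 hc
    have hmem : ∀ k : ℕ, ∀ v : V, p^[k] v = r → (v ∈ S ↔ v ∈ S') := by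
      intro k
      induction k with
      | zero => intro v hv; simp at hv; rw [hv]; exact hr
      | succ k ih =>
        intro v hv
        by_cases hvr : v = r
        · rw [hvr]; exact hr
        · exact (hstep ⟨v, hvr⟩ (ih _ (by simpa using hv))).1
    have hall : ∀ v : V, v ∈ S ↔ v ∈ S' := fun v => by
      obtain ⟨k, hk⟩ := htree v
      exact hmem k v hk
    have hS : S = S' := Finset.ext hall
    have hs : s = s' := by
      funext v
      exact Subtype.ext (hstep v (hall _)).2
    subst hS hs
    rfl
  have hle := Nat.card_le_card_of_injective f hf
  refine hle.trans (le_of_eq ?_)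
  have hcard : Fintype.card {v : V // v ≠ r} = n - 1 := by
    rw [hn]
    simp [Fintype.card_subtype_compl]
  rw [Nat.card_eq_fintype_card, Fintype.card_prod, Fintype.card_bool, Fintype.card_fun, hcard,
    Fintype.card_fin]
end
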